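/- arXiv:2211.03574 — 2 statements merged into one kernel-verified Lean document; each statement's English description precedes it below -/
import Mathlib

section
/- Fix constants 0 < L₀ < L, positive constants β₁, β₂, ρ₁, ρ₂, μ₁, μ₂, λ₁, λ₂, κ, γ, T > 0, and continuous forcing functions g₁, g₂ on [0,L₀]×[0,T] and g₃, g₄ on [L₀,L]×[0,T]. Let (φ, ω, u, v) be a classical solution of the transmission beam system on [0,T]. Then for every t ∈ [0,T] the energy equality holds: 𝓔(t) + κ ∫₀^t ∫₀^{L₀} φ_{xτ}² dx dτ + γ ∫₀^t ∫₀^{L₀} ω_τ² dx dτ = 𝓔(0) + ∫₀^t [ ∫₀^{L₀} (g₁ φ_τ + g₂ ω_τ) dx + ∫_{L₀}^{L} (g₃ u_τ + g₄ v_τ) dx ] dτ. -/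
open MeasureTheory

/-- Partial derivative in the first (space) variable. -/
noncomputable def pdx (f : ℝ → ℝ → ℝ) : ℝ → ℝ → ℝ := fun x t => deriv (fun y => f y t) x

/-- Partial derivative in the second (time) variable. -/
noncomputable def pdt (f : ℝ → ℝ → ℝ) : ℝ → ℝ → ℝ := fun x t => deriv (fun s => f x s) t

def Sm (f : ℝ → ℝ → ℝ) : Prop := ContDiff ℝ (⊤ : ℕ∞) (Function.uncurry f)

lemma Sm.dx {f} (h : Sm f) (x t : ℝ) : HasDerivAt (fun y => f y t) (pdx f x t) x := by
  have h1 : ContDiff ℝ (⊤ : ℕ∞) (fun y => f y t) :=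
    ContDiff.comp (g := Function.uncurry f) h (contDiff_id.prodMk contDiff_const)
  exact ((h1.differentiable (by simp)) x).hasDerivAt

lemma Sm.dt {f} (h : Sm f) (x t : ℝ) : HasDerivAt (fun s => f x s) (pdt f x t) t := by
  have h1 : ContDiff ℝ (⊤ : ℕ∞) (fun s => f x s) :=
    ContDiff.comp (g := Function.uncurry f) h (contDiff_const.prodMk contDiff_id)
  exact ((h1.differentiable (by simp)) t).hasDerivAt

lemma Sm.pdx_eq {f} (h : Sm f) (x t : ℝ) :
    pdx f x t = fderiv ℝ (Function.uncurry f) (x, t) (1, 0) := by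
  have h1 := ((h.differentiable (by simp)) (x, t)).hasFDerivAt
  have h2 : HasDerivAt (fun y : ℝ => (y, t)) ((1 : ℝ), (0 : ℝ)) x :=
    (hasDerivAt_id x).prodMk (hasDerivAt_const x t)
  exact (h.dx x t).unique (HasFDerivAt.comp_hasDerivAt (f := fun y : ℝ => (y, t)) x h1 h2)

lemma Sm.pdt_eq {f} (h : Sm f) (x t : ℝ) :
    pdt f x t = fderiv ℝ (Function.uncurry f) (x, t) (0, 1) := by
  have h1 := ((h.differentiable (by simp)) (x, t)).hasFDerivAt
  have h2 : HasDerivAt (fun y : ℝ => (x, y)) ((0 : ℝ), (1 : ℝ)) t :=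
    (hasDerivAt_const t x).prodMk (hasDerivAt_id t)
  exact (h.dt x t).unique (h1.comp_hasDerivAt t h2)

lemma Sm.fd {f} (h : Sm f) (w : ℝ × ℝ) :
    ContDiff ℝ (⊤ : ℕ∞) (fun p => fderiv ℝ (Function.uncurry f) p w) :=
  (h.fderiv_right (m := (⊤ : ℕ∞)) (by simp)).clm_apply contDiff_const

lemma Sm.px {f} (h : Sm f) : Sm (pdx f) := by
  have : Function.uncurry (pdx f) = fun p => fderiv ℝ (Function.uncurry f) p (1, 0) := by
    ext ⟨x, t⟩; exact h.pdx_eq x t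
  rw [Sm, this]; exact h.fd _

lemma Sm.pt {f} (h : Sm f) : Sm (pdt f) := by
  have : Function.uncurry (pdt f) = fun p => fderiv ℝ (Function.uncurry f) p (0, 1) := by
    ext ⟨x, t⟩; exact h.pdt_eq x t
  rw [Sm, this]; exact h.fd _

lemma Sm.comm {f} (h : Sm f) : pdt (pdx f) = pdx (pdt f) := by
  funext x t
  have e1 : Function.uncurry (pdx f) = fun p => fderiv ℝ (Function.uncurry f) p (1, 0) := by
    ext ⟨x, t⟩; exact h.pdx_eq x t
  have e2 : Function.uncurry (pdt f) = fun p => fderiv ℝ (Function.uncurry f) p (0, 1) := by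
    ext ⟨x, t⟩; exact h.pdt_eq x t
  have hd : DifferentiableAt ℝ (fderiv ℝ (Function.uncurry f)) (x, t) :=
    ((h.fderiv_right (m := (⊤ : ℕ∞)) (by simp)).differentiable (by simp)) (x, t)
  rw [h.px.pdt_eq, h.pt.pdx_eq, e1, e2, fderiv_clm_apply hd (by fun_prop),
    fderiv_clm_apply hd (by fun_prop)]
  simp
  have := (h.contDiffAt (x := (x, t))).isSymmSndFDerivAt (by simp; exact WithTop.coe_le_coe.2 (le_top : (2 : ℕ∞) ≤ ⊤))
  exact this _ _

lemma Sm.c {f} (h : Sm f) : Continuous (fun p : ℝ × ℝ => f p.1 p.2) := ContDiff.continuous h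

lemma fubini_cont (e : ℝ → ℝ → ℝ) (h : Continuous (fun p : ℝ × ℝ => e p.1 p.2)) (a b c d : ℝ) :
    ∫ x in a..b, ∫ t in c..d, e x t = ∫ t in c..d, ∫ x in a..b, e x t := by
  apply intervalIntegral_intervalIntegral_swap
  have h' : Continuous (Function.uncurry e) := h
  exact (h'.continuousOn.integrableOn_compact (isCompact_uIcc.prod isCompact_uIcc)).mono_set
    (Set.prod_mono Set.uIoc_subset_uIcc Set.uIoc_subset_uIcc)

lemma cint (e : ℝ → ℝ → ℝ) (h : Continuous (fun p : ℝ × ℝ => e p.1 p.2)) (a b : ℝ) :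
    Continuous (fun t => ∫ x in a..b, e x t) := by
  apply intervalIntegral.continuous_parametric_intervalIntegral_of_continuous'
  exact h.comp continuous_swap

lemma cslice (e : ℝ → ℝ → ℝ) (h : Continuous (fun p : ℝ × ℝ => e p.1 p.2)) (t : ℝ) :
    Continuous (fun x => e x t) := h.comp (f := fun x => (x, t)) (by fun_prop)
lemma cslice' (e : ℝ → ℝ → ℝ) (h : Continuous (fun p : ℝ × ℝ => e p.1 p.2)) (x : ℝ) :
    Continuous (fun t => e x t) := h.comp (f := fun t => (x, t)) (by fun_prop)

/-- abstract balance law -/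
lemma balance (e e' F F' P D₁ D₂ : ℝ → ℝ → ℝ) (κ γ a b t : ℝ)
    (he : ∀ x t, HasDerivAt (fun s => e x s) (e' x t) t)
    (hF : ∀ x t, HasDerivAt (fun y => F y t) (F' x t) x)
    (ce : Continuous (fun p : ℝ × ℝ => e p.1 p.2))
    (ce' : Continuous (fun p : ℝ × ℝ => e' p.1 p.2))
    (cF' : Continuous (fun p : ℝ × ℝ => F' p.1 p.2))
    (cP : Continuous (fun p : ℝ × ℝ => P p.1 p.2))
    (c1 : Continuous (fun p : ℝ × ℝ => D₁ p.1 p.2))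
    (c2 : Continuous (fun p : ℝ × ℝ => D₂ p.1 p.2))
    (hid : ∀ x t, (1 / 2) * e' x t + κ * D₁ x t + γ * D₂ x t = P x t + F' x t) :
    (1 / 2) * (∫ x in a..b, e x t) + κ * (∫ τ in (0:ℝ)..t, ∫ x in a..b, D₁ x τ)
      + γ * (∫ τ in (0:ℝ)..t, ∫ x in a..b, D₂ x τ)
    = (1 / 2) * (∫ x in a..b, e x 0) + (∫ τ in (0:ℝ)..t, ∫ x in a..b, P x τ)
      + ∫ τ in (0:ℝ)..t, (F b τ - F a τ) := by
  have i0 : ∀ f : ℝ → ℝ → ℝ, Continuous (fun p : ℝ × ℝ => f p.1 p.2) → ∀ s,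
    IntervalIntegrable (fun x => f x s) volume a b :=
    fun f h s => (cslice f h s).intervalIntegrable _ _
  have i1 : ∀ f : ℝ → ℝ → ℝ, Continuous (fun p : ℝ × ℝ => f p.1 p.2) →
    IntervalIntegrable (fun s => ∫ x in a..b, f x s) volume 0 t :=
    fun f h => (cint f h a b).intervalIntegrable _ _
  have h1 : (∫ x in a..b, e x t) - (∫ x in a..b, e x 0) = ∫ τ in (0:ℝ)..t, ∫ x in a..b, e' x τ := by
    rw [← intervalIntegral.integral_sub (i0 e ce t) (i0 e ce 0), ← fubini_cont e' ce']
    congr 1; funext x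
    exact (intervalIntegral.integral_eq_sub_of_hasDerivAt (fun s _ => he x s)
      ((cslice' e' ce' x).intervalIntegrable _ _)).symm
  have h2 : ∀ τ, ∫ x in a..b, F' x τ = F b τ - F a τ := fun τ =>
    intervalIntegral.integral_eq_sub_of_hasDerivAt (fun s _ => hF s τ) (i0 F' cF' τ)
  have h3 : ∀ τ, (1 / 2) * (∫ x in a..b, e' x τ) + κ * (∫ x in a..b, D₁ x τ)
      + γ * (∫ x in a..b, D₂ x τ) = (∫ x in a..b, P x τ) + ∫ x in a..b, F' x τ := by
    intro τ
    rw [← intervalIntegral.integral_add (i0 P cP τ) (i0 F' cF' τ),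
      ← intervalIntegral.integral_const_mul, ← intervalIntegral.integral_const_mul,
      ← intervalIntegral.integral_const_mul,
      ← intervalIntegral.integral_add ((i0 e' ce' τ).const_mul _) ((i0 D₁ c1 τ).const_mul _),
      ← intervalIntegral.integral_add (((i0 e' ce' τ).const_mul _).add ((i0 D₁ c1 τ).const_mul _))
        ((i0 D₂ c2 τ).const_mul _)]
    congr 1; funext x; exact hid x τ
  have h4 : ∫ τ in (0:ℝ)..t, ((1 / 2) * (∫ x in a..b, e' x τ) + κ * (∫ x in a..b, D₁ x τ)
      + γ * (∫ x in a..b, D₂ x τ)) =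
      ∫ τ in (0:ℝ)..t, ((∫ x in a..b, P x τ) + ∫ x in a..b, F' x τ) := by
    congr 1; funext τ; exact h3 τ
  rw [intervalIntegral.integral_add (i1 P cP) (i1 F' cF'),
      intervalIntegral.integral_add (((i1 e' ce').const_mul _).add ((i1 D₁ c1).const_mul _))
        ((i1 D₂ c2).const_mul _),
      intervalIntegral.integral_add ((i1 e' ce').const_mul _) ((i1 D₁ c1).const_mul _),
      intervalIntegral.integral_const_mul, intervalIntegral.integral_const_mul,
      intervalIntegral.integral_const_mul, ← h1] at h4
  simp only [h2] at h4
  linarith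

/-- the flux -/
noncomputable def flux (μ lam κ : ℝ) (φ ω : ℝ → ℝ → ℝ) (x t : ℝ) : ℝ :=
  -(lam * pdx (pdx (pdx φ)) x t - μ * pdx (pdt (pdt φ)) x t - κ * pdx (pdt φ) x t) * pdt φ x t
   + lam * pdx (pdx φ) x t * pdx (pdt φ) x t
   + pdx φ x t * (pdx ω x t + (pdx φ x t) ^ 2 / 2) * pdt φ x t
   + (pdx ω x t + (pdx φ x t) ^ 2 / 2) * pdt ω x t

lemma beam (T β ρ μ lam κ γ a b : ℝ) (hab : a < b) (g₁ g₂ φ ω : ℝ → ℝ → ℝ)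
    (hφ : Sm φ) (hω : Sm ω)
    (heq1 : ∀ x ∈ Set.Ioo a b, ∀ t ∈ Set.Ioo (0:ℝ) T,
      β * pdt (pdt φ) x t - μ * pdx (pdx (pdt (pdt φ))) x t
        - κ * pdx (pdx (pdt φ)) x t + lam * pdx (pdx (pdx (pdx φ))) x t
        - pdx (fun y s => pdx φ y s * (pdx ω y s + (pdx φ y s) ^ 2 / 2)) x t = g₁ x t)
    (heq2 : ∀ x ∈ Set.Ioo a b, ∀ t ∈ Set.Ioo (0:ℝ) T,
      ρ * pdt (pdt ω) x t + γ * pdt ω x t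
        - pdx (fun y s => pdx ω y s + (pdx φ y s) ^ 2 / 2) x t = g₂ x t)
    (t : ℝ) (ht : t ∈ Set.Icc 0 T) :
    ∃ Q : ℝ → ℝ, Continuous Q ∧
     (∀ τ ∈ Set.Ioo (0:ℝ) t, ∫ x in a..b, (g₁ x τ * pdt φ x τ + g₂ x τ * pdt ω x τ) = Q τ) ∧
    (1 / 2) * (∫ x in a..b, (β * (pdt φ x t) ^ 2 + ρ * (pdt ω x t) ^ 2 + μ * (pdx (pdt φ) x t) ^ 2
            + lam * (pdx (pdx φ) x t) ^ 2
            + (pdx ω x t + (pdx φ x t) ^ 2 / 2) ^ 2))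
      + κ * (∫ τ in (0:ℝ)..t, ∫ x in a..b, (pdx (pdt φ) x τ) ^ 2)
      + γ * (∫ τ in (0:ℝ)..t, ∫ x in a..b, (pdt ω x τ) ^ 2)
    = (1 / 2) * (∫ x in a..b, (β * (pdt φ x 0) ^ 2 + ρ * (pdt ω x 0) ^ 2 + μ * (pdx (pdt φ) x 0) ^ 2
            + lam * (pdx (pdx φ) x 0) ^ 2
            + (pdx ω x 0 + (pdx φ x 0) ^ 2 / 2) ^ 2)) + (∫ τ in (0:ℝ)..t, Q τ)
      + ∫ τ in (0:ℝ)..t, (flux μ lam κ φ ω b τ - flux μ lam κ φ ω a τ) := by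
  have x1 : ∀ x t, HasDerivAt (fun y => pdx ω y t + (pdx φ y t) ^ 2 / 2)
      (pdx (pdx ω) x t + pdx φ x t * pdx (pdx φ) x t) x := fun x t => by
    refine ((hω.px.dx x t).add (((hφ.px.dx x t).pow 2).div_const 2)).congr_deriv ?_
    ring
  have x2 : ∀ x t, HasDerivAt (fun y => pdx φ y t * (pdx ω y t + (pdx φ y t) ^ 2 / 2))
      (pdx (pdx φ) x t * (pdx ω x t + (pdx φ x t) ^ 2 / 2) +
        pdx φ x t * (pdx (pdx ω) x t + pdx φ x t * pdx (pdx φ) x t)) x := fun x t =>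
    (hφ.px.dx x t).mul (x1 x t)
  have y1 : ∀ x t, pdx (fun y s => pdx ω y s + (pdx φ y s) ^ 2 / 2) x t = _ :=
    fun x t => (x1 x t).deriv
  have y2 : ∀ x t, pdx (fun y s => pdx φ y s * (pdx ω y s + (pdx φ y s) ^ 2 / 2)) x t = _ :=
    fun x t => (x2 x t).deriv
  simp only [y1] at heq2
  simp only [y2] at heq1
  have k1 := hφ.pt.pt.px.px.c
  have k2 := hφ.pt.px.px.c
  have k3 := hφ.px.px.px.px.c
  have k4 := hφ.px.px.px.c
  have k5 := hφ.px.px.c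
  have k6 := hφ.px.c
  have k7 := hφ.pt.c
  have k8 := hφ.pt.px.c
  have k9 := hφ.pt.pt.c
  have k10 := hφ.pt.pt.px.c
  have l1 := hω.px.px.c
  have l2 := hω.px.c
  have l3 := hω.pt.c
  have l4 := hω.pt.px.c
  have l5 := hω.pt.pt.c
  let G₁ : ℝ → ℝ → ℝ := fun x t => β * pdt (pdt φ) x t - μ * pdx (pdx (pdt (pdt φ))) x t
        - κ * pdx (pdx (pdt φ)) x t + lam * pdx (pdx (pdx (pdx φ))) x t
        - (pdx (pdx φ) x t * (pdx ω x t + (pdx φ x t) ^ 2 / 2) +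
        pdx φ x t * (pdx (pdx ω) x t + pdx φ x t * pdx (pdx φ) x t))
  let G₂ : ℝ → ℝ → ℝ := fun x t => ρ * pdt (pdt ω) x t + γ * pdt ω x t
        - (pdx (pdx ω) x t + pdx φ x t * pdx (pdx φ) x t)
  let P : ℝ → ℝ → ℝ := fun x t => G₁ x t * pdt φ x t + G₂ x t * pdt ω x t
  have cP : Continuous (fun p : ℝ × ℝ => P p.1 p.2) := by
    simp only [P, G₁, G₂]; fun_prop
  refine ⟨fun τ => ∫ x in a..b, P x τ, cint P cP a b, ?_, ?_⟩
  · intro τ hτ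
    apply intervalIntegral.integral_congr_Ioo_of_le hab.le
    intro x hx
    have hτ' : τ ∈ Set.Ioo 0 T := ⟨hτ.1, hτ.2.trans_le ht.2⟩
    simp only [P, G₁, G₂, heq1 x hx τ hτ', heq2 x hx τ hτ']
  have c1 : pdt (pdx φ) = pdx (pdt φ) := hφ.comm
  have c2 : pdt (pdx (pdx φ)) = pdx (pdx (pdt φ)) := by rw [hφ.px.comm, hφ.comm]
  have c3 : pdt (pdx (pdt φ)) = pdx (pdt (pdt φ)) := hφ.pt.comm
  have c4 : pdt (pdx ω) = pdx (pdt ω) := hω.comm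
  refine balance (fun x t => β * (pdt φ x t) ^ 2 + ρ * (pdt ω x t) ^ 2 + μ * (pdx (pdt φ) x t) ^ 2
            + lam * (pdx (pdx φ) x t) ^ 2
            + (pdx ω x t + (pdx φ x t) ^ 2 / 2) ^ 2)
    (fun x t => 2 * (β * (pdt φ x t * pdt (pdt φ) x t) + ρ * (pdt ω x t * pdt (pdt ω) x t)
        + μ * (pdx (pdt φ) x t * pdx (pdt (pdt φ)) x t)
        + lam * (pdx (pdx φ) x t * pdx (pdx (pdt φ)) x t)
        + (pdx ω x t + (pdx φ x t) ^ 2 / 2) * (pdx (pdt ω) x t + pdx φ x t * pdx (pdt φ) x t)))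
    (flux μ lam κ φ ω)
    (fun x t =>
      -(lam * pdx (pdx (pdx (pdx φ))) x t - μ * pdx (pdx (pdt (pdt φ))) x t
          - κ * pdx (pdx (pdt φ)) x t) * pdt φ x t
      - (lam * pdx (pdx (pdx φ)) x t - μ * pdx (pdt (pdt φ)) x t - κ * pdx (pdt φ) x t)
          * pdx (pdt φ) x t
      + lam * pdx (pdx (pdx φ)) x t * pdx (pdt φ) x t
      + lam * pdx (pdx φ) x t * pdx (pdx (pdt φ)) x t
      + (pdx (pdx φ) x t * (pdx ω x t + (pdx φ x t) ^ 2 / 2) +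
        pdx φ x t * (pdx (pdx ω) x t + pdx φ x t * pdx (pdx φ) x t)) * pdt φ x t
      + pdx φ x t * (pdx ω x t + (pdx φ x t) ^ 2 / 2) * pdx (pdt φ) x t
      + (pdx (pdx ω) x t + pdx φ x t * pdx (pdx φ) x t) * pdt ω x t
      + (pdx ω x t + (pdx φ x t) ^ 2 / 2) * pdx (pdt ω) x t)
    P _ _ κ γ a b t ?_ ?_ (by fun_prop) (by fun_prop) (by fun_prop) cP (by fun_prop)
    (by fun_prop) ?_
  · intro x t
    have d1 := hφ.pt.dt x t
    have d2 := hω.pt.dt x t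
    have d3 := hφ.pt.px.dt x t
    have d4 := hφ.px.px.dt x t
    have d5 := hω.px.dt x t
    have d6 := hφ.px.dt x t
    rw [c3] at d3; rw [c2] at d4; rw [c4] at d5; rw [c1] at d6
    refine ((((((d1.pow 2).const_mul β).add ((d2.pow 2).const_mul ρ)).add
      ((d3.pow 2).const_mul μ)).add ((d4.pow 2).const_mul lam)).add
      ((d5.add ((d6.pow 2).div_const 2)).pow 2)).congr_deriv ?_
    simp
    ring
  · intro x t
    have d := ((((((((hφ.px.px.px.dx x t).const_mul lam).sub ((hφ.pt.pt.px.dx x t).const_mul μ)).sub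
      ((hφ.pt.px.dx x t).const_mul κ)).neg.mul (hφ.pt.dx x t))).add
      (((hφ.px.px.dx x t).const_mul lam).mul (hφ.pt.px.dx x t))).add
      ((x2 x t).mul (hφ.pt.dx x t))).add ((x1 x t).mul (hω.pt.dx x t))
    refine d.congr_deriv ?_
    simp
    ring
  · intro x t
    simp only [P, G₁, G₂]
    ring

lemma dt_eq {f h : ℝ → ℝ → ℝ} {a T t : ℝ} (ht : t ∈ Set.Ioo 0 T)
    (H : ∀ s ∈ Set.Icc 0 T, f a s = h a s) : pdt f a t = pdt h a t := by
  apply Filter.EventuallyEq.deriv_eq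
  filter_upwards [Ioo_mem_nhds ht.1 ht.2] with s hs
  exact H s ⟨hs.1.le, hs.2.le⟩

lemma dt_zero {f : ℝ → ℝ → ℝ} {a T t : ℝ} (ht : t ∈ Set.Ioo 0 T)
    (H : ∀ s ∈ Set.Icc 0 T, f a s = 0) : pdt f a t = 0 := by
  rw [dt_eq (h := fun _ _ => 0) ht H]; simp [pdt]

lemma flux_cont {φ ω : ℝ → ℝ → ℝ} (hφ : Sm φ) (hω : Sm ω) (μ lam κ a : ℝ) :
    Continuous (fun τ => flux μ lam κ φ ω a τ) := by
  have k4 := cslice' _ hφ.px.px.px.c a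
  have k5 := cslice' _ hφ.px.px.c a
  have k6 := cslice' _ hφ.px.c a
  have k7 := cslice' _ hφ.pt.c a
  have k8 := cslice' _ hφ.pt.px.c a
  have k10 := cslice' _ hφ.pt.pt.px.c a
  have l2 := cslice' _ hω.px.c a
  have l3 := cslice' _ hω.pt.c a
  unfold flux
  fun_prop

/-- Energy equality for classical solutions of the nonlinear transmission problem for
the full von Karman beam (Theorem 3 (iii) of the paper). -/
theorem stmt_4 (L₀ L T β₁ β₂ ρ₁ ρ₂ μ₁ μ₂ lam₁ lam₂ κ γ : ℝ)
    (hL₀ : 0 < L₀) (hL : L₀ < L) (hT : 0 < T)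
    (hβ₁ : 0 < β₁) (hβ₂ : 0 < β₂) (hρ₁ : 0 < ρ₁) (hρ₂ : 0 < ρ₂)
    (hμ₁ : 0 < μ₁) (hμ₂ : 0 < μ₂) (hlam₁ : 0 < lam₁) (hlam₂ : 0 < lam₂)
    (hκ : 0 < κ) (hγ : 0 < γ)
    (g₁ g₂ g₃ g₄ : ℝ → ℝ → ℝ)
    (hg₁ : ContinuousOn (Function.uncurry g₁) (Set.Icc 0 L₀ ×ˢ Set.Icc 0 T))
    (hg₂ : ContinuousOn (Function.uncurry g₂) (Set.Icc 0 L₀ ×ˢ Set.Icc 0 T))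
    (hg₃ : ContinuousOn (Function.uncurry g₃) (Set.Icc L₀ L ×ˢ Set.Icc 0 T))
    (hg₄ : ContinuousOn (Function.uncurry g₄) (Set.Icc L₀ L ×ˢ Set.Icc 0 T))
    (φ ω u v : ℝ → ℝ → ℝ)
    (hφ : ∀ n : ℕ, ContDiff ℝ n (Function.uncurry φ))
    (hω : ∀ n : ℕ, ContDiff ℝ n (Function.uncurry ω))
    (hu : ∀ n : ℕ, ContDiff ℝ n (Function.uncurry u))
    (hv : ∀ n : ℕ, ContDiff ℝ n (Function.uncurry v))
    -- the four equations of the system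
    (heq1 : ∀ x ∈ Set.Ioo (0:ℝ) L₀, ∀ t ∈ Set.Ioo (0:ℝ) T,
      β₁ * pdt (pdt φ) x t - μ₁ * pdx (pdx (pdt (pdt φ))) x t
        - κ * pdx (pdx (pdt φ)) x t + lam₁ * pdx (pdx (pdx (pdx φ))) x t
        - pdx (fun y s => pdx φ y s * (pdx ω y s + (pdx φ y s) ^ 2 / 2)) x t = g₁ x t)
    (heq2 : ∀ x ∈ Set.Ioo (0:ℝ) L₀, ∀ t ∈ Set.Ioo (0:ℝ) T,
      ρ₁ * pdt (pdt ω) x t + γ * pdt ω x t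
        - pdx (fun y s => pdx ω y s + (pdx φ y s) ^ 2 / 2) x t = g₂ x t)
    (heq3 : ∀ x ∈ Set.Ioo L₀ L, ∀ t ∈ Set.Ioo (0:ℝ) T,
      β₂ * pdt (pdt u) x t - μ₂ * pdx (pdx (pdt (pdt u))) x t
        + lam₂ * pdx (pdx (pdx (pdx u))) x t
        - pdx (fun y s => pdx u y s * (pdx v y s + (pdx u y s) ^ 2 / 2)) x t = g₃ x t)
    (heq4 : ∀ x ∈ Set.Ioo L₀ L, ∀ t ∈ Set.Ioo (0:ℝ) T,
      ρ₂ * pdt (pdt v) x t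
        - pdx (fun y s => pdx v y s + (pdx u y s) ^ 2 / 2) x t = g₄ x t)
    -- boundary conditions at the ends of the beam
    (hbc : ∀ t ∈ Set.Icc (0:ℝ) T,
      φ 0 t = 0 ∧ pdx φ 0 t = 0 ∧ ω 0 t = 0 ∧
      u L t = 0 ∧ pdx (pdx u) L t = 0 ∧ v L t = 0)
    -- transmission conditions at the interface x = L₀
    (htr : ∀ t ∈ Set.Icc (0:ℝ) T,
      φ L₀ t = u L₀ t ∧ ω L₀ t = v L₀ t ∧ pdx φ L₀ t = pdx u L₀ t ∧
      lam₁ * pdx (pdx φ) L₀ t = lam₂ * pdx (pdx u) L₀ t ∧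
      pdx ω L₀ t = pdx v L₀ t ∧
      lam₁ * pdx (pdx (pdx φ)) L₀ t - μ₁ * pdx (pdt (pdt φ)) L₀ t
          - κ * pdx (pdt φ) L₀ t
        = lam₂ * pdx (pdx (pdx u)) L₀ t - μ₂ * pdx (pdt (pdt u)) L₀ t)
    -- the energy functional
    (E : ℝ → ℝ)
    (hE : ∀ t : ℝ, E t = (1 / 2) *
      ((∫ x in (0:ℝ)..L₀,
          (β₁ * (pdt φ x t) ^ 2 + ρ₁ * (pdt ω x t) ^ 2 + μ₁ * (pdx (pdt φ) x t) ^ 2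
            + lam₁ * (pdx (pdx φ) x t) ^ 2
            + (pdx ω x t + (pdx φ x t) ^ 2 / 2) ^ 2)) +
       (∫ x in L₀..L,
          (β₂ * (pdt u x t) ^ 2 + ρ₂ * (pdt v x t) ^ 2 + μ₂ * (pdx (pdt u) x t) ^ 2
            + lam₂ * (pdx (pdx u) x t) ^ 2
            + (pdx v x t + (pdx u x t) ^ 2 / 2) ^ 2)))) :
    ∀ t ∈ Set.Icc (0:ℝ) T,
      E t + κ * (∫ τ in (0:ℝ)..t, (∫ x in (0:ℝ)..L₀, (pdx (pdt φ) x τ) ^ 2))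
          + γ * (∫ τ in (0:ℝ)..t, (∫ x in (0:ℝ)..L₀, (pdt ω x τ) ^ 2))
        = E 0 + ∫ τ in (0:ℝ)..t,
            ((∫ x in (0:ℝ)..L₀, (g₁ x τ * pdt φ x τ + g₂ x τ * pdt ω x τ)) +
             (∫ x in L₀..L, (g₃ x τ * pdt u x τ + g₄ x τ * pdt v x τ))) := by
  have sφ : Sm φ := contDiff_infty.2 hφ
  have sω : Sm ω := contDiff_infty.2 hω
  have su : Sm u := contDiff_infty.2 hu
  have sv : Sm v := contDiff_infty.2 hv
  intro t ht
  obtain ⟨Q₁, cQ₁, hQ₁, B₁⟩ := beam T β₁ ρ₁ μ₁ lam₁ κ γ 0 L₀ hL₀ g₁ g₂ φ ω sφ sω heq1 heq2 t ht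
  obtain ⟨Q₂, cQ₂, hQ₂, B₂⟩ := beam T β₂ ρ₂ μ₂ lam₂ 0 0 L₀ L hL g₃ g₄ u v su sv
    (by simpa using heq3) (by simpa using heq4) t ht
  have hg : ∫ τ in (0:ℝ)..t,
            ((∫ x in (0:ℝ)..L₀, (g₁ x τ * pdt φ x τ + g₂ x τ * pdt ω x τ)) +
             (∫ x in L₀..L, (g₃ x τ * pdt u x τ + g₄ x τ * pdt v x τ)))
      = ∫ τ in (0:ℝ)..t, (Q₁ τ + Q₂ τ) := by
    apply intervalIntegral.integral_congr_Ioo_of_le ht.1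
    intro τ hτ
    simp only [hQ₁ τ hτ, hQ₂ τ hτ]
  have hf : (∫ τ in (0:ℝ)..t, (flux μ₁ lam₁ κ φ ω L₀ τ - flux μ₁ lam₁ κ φ ω 0 τ)) +
      (∫ τ in (0:ℝ)..t, (flux μ₂ lam₂ 0 u v L τ - flux μ₂ lam₂ 0 u v L₀ τ)) = 0 := by
    rw [← intervalIntegral.integral_add
      (((flux_cont sφ sω μ₁ lam₁ κ L₀).fun_sub (flux_cont sφ sω μ₁ lam₁ κ 0)).intervalIntegrable _ _)
      (((flux_cont su sv μ₂ lam₂ 0 L).fun_sub (flux_cont su sv μ₂ lam₂ 0 L₀)).intervalIntegrable _ _)]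
    rw [intervalIntegral.integral_congr_Ioo_of_le (g := fun _ => (0:ℝ)) ht.1]
    · simp
    intro τ hτ
    have hτ' : τ ∈ Set.Ioo 0 T := ⟨hτ.1, hτ.2.trans_le ht.2⟩
    have hτ'' : τ ∈ Set.Icc 0 T := ⟨hτ'.1.le, hτ'.2.le⟩
    obtain ⟨-, b2, -, -, b5, -⟩ := hbc τ hτ''
    obtain ⟨-, -, t3, t4, t5, t6⟩ := htr τ hτ''
    have z1 := dt_zero hτ' (fun s hs => (hbc s hs).1)
    have z2 := dt_zero hτ' (fun s hs => (hbc s hs).2.1)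
    have z3 := dt_zero hτ' (fun s hs => (hbc s hs).2.2.1)
    have z4 := dt_zero hτ' (fun s hs => (hbc s hs).2.2.2.1)
    have z6 := dt_zero hτ' (fun s hs => (hbc s hs).2.2.2.2.2)
    have w1 := dt_eq hτ' (fun s hs => (htr s hs).1)
    have w2 := dt_eq hτ' (fun s hs => (htr s hs).2.1)
    have w3 := dt_eq hτ' (fun s hs => (htr s hs).2.2.1)
    rw [sφ.comm] at z2
    rw [sφ.comm, su.comm] at w3
    rw [w3] at t6
    simp only [flux, z1, z2, z3, z4, z6, w1, w2, w3, t3, t4, t5, t6, b5]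
    ring
  rw [hg, intervalIntegral.integral_add (cQ₁.intervalIntegrable _ _) (cQ₂.intervalIntegrable _ _),
    hE t, hE 0]
  linarith
end

section
/- Let T > 0, 0 < L₀ < L, and μ₁, μ₂ > 0. Let η ∈ C¹([0,L]) with η(0) = η(L) = 0 and η(L₀) ≤ 0. Let φ : [0,L₀]×[0,T] → ℝ and u : [L₀,L]×[0,T] → ℝ be C³ functions with φ_x(L₀,t) = u_x(L₀,t) for all t ∈ [0,T]. Then μ₁∫₀^T∫₀^{L₀} φ_ttx (η φ_xx + η′ φ_x) dx dt + μ₂∫₀^T∫_{L₀}^{L} u_ttx (η u_xx + η′ u_x) dx dt = −(μ₁/2)∫₀^T∫₀^{L₀} φ_tx² η′ dx dt − (μ₂/2)∫₀^T∫_{L₀}^{L} u_tx² η′ dx dt + (μ₁ − μ₂)(−η(L₀))/2 ∫₀^T u_tx(L₀,t)² dt + [μ₁∫₀^{L₀} φ_tx (η′ φ_x + η φ_xx) dx + μ₂∫_{L₀}^{L} u_tx (η′ u_x + η u_xx) dx] evaluated at t = T minus the same expression evaluated at t = 0. -/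
open MeasureTheory

lemma aux_hx {f : ℝ → ℝ → ℝ} (hf : Differentiable ℝ (Function.uncurry f)) (x t : ℝ) :
    HasDerivAt (fun y => f y t) (fderiv ℝ (Function.uncurry f) (x, t) (1, 0)) x := by
  have h1 : HasDerivAt (fun y : ℝ => (y, t)) ((1 : ℝ), (0 : ℝ)) x :=
    (hasDerivAt_id x).prodMk (hasDerivAt_const x t)
  exact (hf (x, t)).hasFDerivAt.comp_hasDerivAt x h1

lemma aux_ht {f : ℝ → ℝ → ℝ} (hf : Differentiable ℝ (Function.uncurry f)) (x t : ℝ) :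
    HasDerivAt (fun s => f x s) (fderiv ℝ (Function.uncurry f) (x, t) (0, 1)) t := by
  have h1 : HasDerivAt (fun s : ℝ => (x, s)) ((0 : ℝ), (1 : ℝ)) t :=
    (hasDerivAt_const t x).prodMk (hasDerivAt_id t)
  exact (hf (x, t)).hasFDerivAt.comp_hasDerivAt t h1

lemma aux_px {f : ℝ → ℝ → ℝ} (hf : Differentiable ℝ (Function.uncurry f)) :
    Function.uncurry (pdx f) = fun p => fderiv ℝ (Function.uncurry f) p (1, 0) := by
  ext ⟨x, t⟩
  exact (aux_hx hf x t).deriv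

lemma aux_pt {f : ℝ → ℝ → ℝ} (hf : Differentiable ℝ (Function.uncurry f)) :
    Function.uncurry (pdt f) = fun p => fderiv ℝ (Function.uncurry f) p (0, 1) := by
  ext ⟨x, t⟩
  exact (aux_ht hf x t).deriv

lemma aux_dx {f : ℝ → ℝ → ℝ} (hf : Differentiable ℝ (Function.uncurry f)) (x t : ℝ) :
    HasDerivAt (fun y => f y t) (pdx f x t) x :=
  (aux_hx hf x t).differentiableAt.hasDerivAt

lemma aux_dt {f : ℝ → ℝ → ℝ} (hf : Differentiable ℝ (Function.uncurry f)) (x t : ℝ) :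
    HasDerivAt (fun s => f x s) (pdt f x t) t :=
  (aux_ht hf x t).differentiableAt.hasDerivAt

lemma aux_cx {f : ℝ → ℝ → ℝ} {m n : WithTop ℕ∞} (hf : ContDiff ℝ n (Function.uncurry f))
    (h : m + 1 ≤ n) : ContDiff ℝ m (Function.uncurry (pdx f)) := by
  have h0 : n ≠ 0 := by rintro rfl; simp at h
  rw [aux_px (hf.differentiable h0)]
  exact (hf.fderiv_right h).clm_apply contDiff_const

lemma aux_ct {f : ℝ → ℝ → ℝ} {m n : WithTop ℕ∞} (hf : ContDiff ℝ n (Function.uncurry f))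
    (h : m + 1 ≤ n) : ContDiff ℝ m (Function.uncurry (pdt f)) := by
  have h0 : n ≠ 0 := by rintro rfl; simp at h
  rw [aux_pt (hf.differentiable h0)]
  exact (hf.fderiv_right h).clm_apply contDiff_const

lemma aux_symm {f : ℝ → ℝ → ℝ} (hf : ContDiff ℝ 2 (Function.uncurry f)) :
    pdx (pdt f) = pdt (pdx f) := by
  have hd := hf.differentiable (by norm_num)
  have hX : ContDiff ℝ 1 (Function.uncurry (pdx f)) := aux_cx hf (by norm_num)
  have hT : ContDiff ℝ 1 (Function.uncurry (pdt f)) := aux_ct hf (by norm_num)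
  have hF : Differentiable ℝ (fderiv ℝ (Function.uncurry f)) :=
    (hf.fderiv_right (m := 1) (by norm_num)).differentiable (by norm_num)
  ext x t
  have e1 := congrFun (aux_px (hT.differentiable (by norm_num))) (x, t)
  have e2 := congrFun (aux_pt (hX.differentiable (by norm_num))) (x, t)
  simp only [Function.uncurry_apply_pair] at e1 e2
  rw [e1, e2, aux_px hd, aux_pt hd]
  have hs := (hf.contDiffAt (x := (x, t))).isSymmSndFDerivAt (by simp)
  rw [fderiv_clm_apply (hF _) (by fun_prop), fderiv_clm_apply (hF _) (by fun_prop)]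
  simp
  exact hs.eq _ _

lemma aux_main (T a b : ℝ) (η : ℝ → ℝ) (hη : ContDiff ℝ 1 η)
    (g : ℝ → ℝ → ℝ) (hg : ContDiff ℝ 2 (Function.uncurry g)) :
    (∫ t in (0:ℝ)..T, (∫ x in a..b,
        pdt (pdt g) x t * (η x * pdx g x t + deriv η x * g x t)))
    = -(1 / 2) * (∫ t in (0:ℝ)..T, (∫ x in a..b, (pdt g x t) ^ 2 * deriv η x))
      - 1 / 2 * (η b * (∫ t in (0:ℝ)..T, (pdt g b t) ^ 2)
        - η a * (∫ t in (0:ℝ)..T, (pdt g a t) ^ 2))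
      + ((∫ x in a..b, pdt g x T * (deriv η x * g x T + η x * pdx g x T))
        - ∫ x in a..b, pdt g x 0 * (deriv η x * g x 0 + η x * pdx g x 0)) := by
  have hgt : ContDiff ℝ 1 (Function.uncurry (pdt g)) := aux_ct hg (by norm_num)
  have hgx : ContDiff ℝ 1 (Function.uncurry (pdx g)) := aux_cx hg (by norm_num)
  have hgtt : ContDiff ℝ 0 (Function.uncurry (pdt (pdt g))) := aux_ct hgt (by norm_num)
  have hgtx : ContDiff ℝ 0 (Function.uncurry (pdx (pdt g))) := aux_cx hgt (by norm_num)
  have dg := hg.differentiable (by norm_num)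
  have dgt := hgt.differentiable (by norm_num)
  have dgx := hgx.differentiable (by norm_num)
  have cg := hg.continuous
  have cgt := hgt.continuous
  have cgx := hgx.continuous
  have cgtt := hgtt.continuous
  have cgtx := hgtx.continuous
  have ce := hη.continuous
  have ce' : Continuous (deriv η) := hη.continuous_deriv le_rfl
  have de : ∀ x, HasDerivAt η (deriv η x) x := fun x =>
    (hη.differentiable (by norm_num) x).hasDerivAt
  have sy := aux_symm hg
  have key : ∀ {h : ℝ → ℝ → ℝ}, Continuous (Function.uncurry h) →
      ∀ {p q : ℝ → ℝ}, (hp : Continuous p) → (hq : Continuous q) →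
      Continuous fun z => h (p z) (q z) := fun hh _ _ hp hq => hh.comp (hp.prodMk hq)
  have key2 : ∀ {h : ℝ → ℝ → ℝ}, Continuous (Function.uncurry h) →
      Continuous fun z : ℝ × ℝ => h z.2 z.1 := fun hh => hh.comp continuous_swap
  have cint : ∀ {h : ℝ → ℝ → ℝ}, Continuous (Function.uncurry h) →
      Continuous fun t => ∫ x in a..b, h x t := fun {h} hh =>
    intervalIntegral.continuous_parametric_intervalIntegral_of_continuous'
      (f := fun t x => h x t) (key2 hh) a b
  -- the two-variable integrands
  let A : ℝ → ℝ → ℝ := fun x t => pdt (pdt g) x t * (η x * pdx g x t + deriv η x * g x t)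
  let B : ℝ → ℝ → ℝ := fun x t => pdt g x t * (η x * pdx (pdt g) x t + deriv η x * pdt g x t)
  let C : ℝ → ℝ → ℝ := fun x t => (pdt g x t) ^ 2 * deriv η x
  let H : ℝ → ℝ → ℝ := fun x t => pdt g x t * (deriv η x * g x t + η x * pdx g x t)
  have c1 : Continuous fun p : ℝ × ℝ => η p.1 := ce.comp continuous_fst
  have c2 : Continuous fun p : ℝ × ℝ => deriv η p.1 := ce'.comp continuous_fst
  have cA : Continuous (Function.uncurry A) :=
    cgtt.mul ((c1.mul cgx).add (c2.mul cg))
  have cB : Continuous (Function.uncurry B) :=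
    cgt.mul ((c1.mul cgtx).add (c2.mul cgt))
  have cC : Continuous (Function.uncurry C) := (cgt.pow 2).mul c2
  have cH : Continuous (Function.uncurry H) :=
    cgt.mul ((c2.mul cg).add (c1.mul cgx))
  have cx : ∀ {h : ℝ → ℝ → ℝ}, Continuous (Function.uncurry h) → ∀ t,
      Continuous fun x => h x t := fun hh t => key hh continuous_id continuous_const
  have ct : ∀ {h : ℝ → ℝ → ℝ}, Continuous (Function.uncurry h) → ∀ x,
      Continuous fun t => h x t := fun hh t => key hh continuous_const continuous_id
  have cAB : Continuous (Function.uncurry fun x t => A x t + B x t) := cA.add cB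
  -- time integration
  have h1 : ∀ x, ∫ t in (0:ℝ)..T, (A x t + B x t) = H x T - H x 0 := by
    intro x
    apply intervalIntegral.integral_eq_sub_of_hasDerivAt (f := fun t => H x t)
    · intro t _
      have := (aux_dt dgt x t).mul
        (((aux_dt dg x t).const_mul (deriv η x)).add ((aux_dt dgx x t).const_mul (η x)))
      refine HasDerivAt.congr_deriv this ?_
      simp only [A, B, sy]
      simp
      ring
    · exact (ct cAB x).intervalIntegrable _ _
  have h2 : ∫ t in (0:ℝ)..T, ∫ x in a..b, (A x t + B x t)
      = ∫ x in a..b, ∫ t in (0:ℝ)..T, (A x t + B x t) := by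
    apply intervalIntegral_intervalIntegral_swap
    exact ((key2 cAB).continuousOn.integrableOn_compact
      (isCompact_uIcc.prod isCompact_uIcc)).mono_set
      (Set.prod_mono Set.uIoc_subset_uIcc Set.uIoc_subset_uIcc)
  have h3 : ∀ t, ∫ x in a..b, B x t = 1 / 2 * (∫ x in a..b, C x t)
      + 1 / 2 * (η b * (pdt g b t) ^ 2 - η a * (pdt g a t) ^ 2) := by
    intro t
    have : ∫ x in a..b, (B x t - 1 / 2 * C x t)
        = 1 / 2 * (η b * (pdt g b t) ^ 2) - 1 / 2 * (η a * (pdt g a t) ^ 2) := by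
      apply intervalIntegral.integral_eq_sub_of_hasDerivAt
        (f := fun x => 1 / 2 * (η x * (pdt g x t) ^ 2))
      · intro x _
        have := ((de x).mul ((aux_dx dgt x t).pow 2)).const_mul (1 / 2)
        refine HasDerivAt.congr_deriv this ?_
        simp only [B, C]
        simp
        ring
      · exact ((cx cB t).sub ((cx cC t).const_mul _)).intervalIntegrable _ _
    rw [intervalIntegral.integral_sub ((cx cB t).intervalIntegrable _ _)
      (((cx cC t).const_mul _).intervalIntegrable _ _),
      intervalIntegral.integral_const_mul] at this
    linarith
  have h4 : ∫ t in (0:ℝ)..T, ∫ x in a..b, (A x t + B x t)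
      = (∫ t in (0:ℝ)..T, ∫ x in a..b, A x t) + ∫ t in (0:ℝ)..T, ∫ x in a..b, B x t := by
    rw [← intervalIntegral.integral_add ((cint cA).intervalIntegrable _ _)
      ((cint cB).intervalIntegrable _ _)]
    congr 1
    ext t
    exact intervalIntegral.integral_add ((cx cA t).intervalIntegrable _ _)
      ((cx cB t).intervalIntegrable _ _)
  have h5 : ∫ t in (0:ℝ)..T, ∫ x in a..b, B x t
      = 1 / 2 * (∫ t in (0:ℝ)..T, ∫ x in a..b, C x t)
        + 1 / 2 * (η b * (∫ t in (0:ℝ)..T, (pdt g b t) ^ 2)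
        - η a * (∫ t in (0:ℝ)..T, (pdt g a t) ^ 2)) := by
    have p1 := (cint cC).const_mul (1 / 2)
    have p2 : Continuous fun t => η b * (pdt g b t) ^ 2 := ((ct cgt b).pow 2).const_mul (η b)
    have p3 : Continuous fun t => η a * (pdt g a t) ^ 2 := ((ct cgt a).pow 2).const_mul (η a)
    have p4 : Continuous fun t => 1 / 2 * (η b * (pdt g b t) ^ 2 - η a * (pdt g a t) ^ 2) :=
      (p2.sub p3).const_mul _
    simp_rw [h3]
    rw [intervalIntegral.integral_add (p1.intervalIntegrable _ _)
      (p4.intervalIntegrable _ _),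
      intervalIntegral.integral_const_mul, intervalIntegral.integral_const_mul,
      intervalIntegral.integral_sub (p2.intervalIntegrable _ _) (p3.intervalIntegrable _ _),
      intervalIntegral.integral_const_mul, intervalIntegral.integral_const_mul]
  have h6 : ∫ x in a..b, ∫ t in (0:ℝ)..T, (A x t + B x t)
      = (∫ x in a..b, H x T) - ∫ x in a..b, H x 0 := by
    simp_rw [h1]
    exact intervalIntegral.integral_sub ((cx cH T).intervalIntegrable _ _)
      ((cx cH 0).intervalIntegrable _ _)
  change (∫ t in (0:ℝ)..T, ∫ x in a..b, A x t)
    = -(1 / 2) * (∫ t in (0:ℝ)..T, ∫ x in a..b, C x t)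
      - 1 / 2 * (η b * (∫ t in (0:ℝ)..T, (pdt g b t) ^ 2)
        - η a * (∫ t in (0:ℝ)..T, (pdt g a t) ^ 2))
      + ((∫ x in a..b, H x T) - ∫ x in a..b, H x 0)
  linarith

/-- Multiplier identity for the rotational-inertia terms in the proof of asymptotic
smoothness of the transmission beam system. -/
theorem stmt_7 (T L₀ L μ₁ μ₂ : ℝ)
    (hT : 0 < T) (hL₀ : 0 < L₀) (hL : L₀ < L)
    (hμ₁ : 0 < μ₁) (hμ₂ : 0 < μ₂)
    (η : ℝ → ℝ) (hη : ContDiff ℝ 1 η)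
    (hη0 : η 0 = 0) (hηL : η L = 0) (hηL₀ : η L₀ ≤ 0)
    (φ u : ℝ → ℝ → ℝ)
    (hφ : ContDiff ℝ 3 (Function.uncurry φ))
    (hu : ContDiff ℝ 3 (Function.uncurry u))
    (htr : ∀ t ∈ Set.Icc (0:ℝ) T, pdx φ L₀ t = pdx u L₀ t)
    (F : ℝ → ℝ)
    (hF : ∀ t : ℝ, F t =
      μ₁ * (∫ x in (0:ℝ)..L₀,
        pdx (pdt φ) x t * (deriv η x * pdx φ x t + η x * pdx (pdx φ) x t))
      + μ₂ * (∫ x in L₀..L,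
        pdx (pdt u) x t * (deriv η x * pdx u x t + η x * pdx (pdx u) x t))) :
    μ₁ * (∫ t in (0:ℝ)..T, (∫ x in (0:ℝ)..L₀,
        pdx (pdt (pdt φ)) x t * (η x * pdx (pdx φ) x t + deriv η x * pdx φ x t)))
      + μ₂ * (∫ t in (0:ℝ)..T, (∫ x in L₀..L,
        pdx (pdt (pdt u)) x t * (η x * pdx (pdx u) x t + deriv η x * pdx u x t)))
    = -(μ₁ / 2) * (∫ t in (0:ℝ)..T, (∫ x in (0:ℝ)..L₀, (pdx (pdt φ) x t) ^ 2 * deriv η x))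
      - (μ₂ / 2) * (∫ t in (0:ℝ)..T, (∫ x in L₀..L, (pdx (pdt u) x t) ^ 2 * deriv η x))
      + (μ₁ - μ₂) * (-η L₀) / 2 * (∫ t in (0:ℝ)..T, (pdx (pdt u) L₀ t) ^ 2)
      + (F T - F 0) := by
  have hφx : ContDiff ℝ 2 (Function.uncurry (pdx φ)) := aux_cx hφ (by norm_num)
  have hux : ContDiff ℝ 2 (Function.uncurry (pdx u)) := aux_cx hu (by norm_num)
  have hφt : ContDiff ℝ 2 (Function.uncurry (pdt φ)) := aux_ct hφ (by norm_num)
  have hut : ContDiff ℝ 2 (Function.uncurry (pdt u)) := aux_ct hu (by norm_num)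
  have s1 := aux_symm (hφ.of_le (by norm_num : (2 : WithTop ℕ∞) ≤ 3))
  have s2 := aux_symm (hu.of_le (by norm_num : (2 : WithTop ℕ∞) ≤ 3))
  have s3 := aux_symm hφt
  have s4 := aux_symm hut
  have m1 := aux_main T 0 L₀ η hη (pdx φ) hφx
  have m2 := aux_main T L₀ L η hη (pdx u) hux
  have tr : ∫ t in (0:ℝ)..T, (pdt (pdx φ) L₀ t) ^ 2 = ∫ t in (0:ℝ)..T, (pdt (pdx u) L₀ t) ^ 2 := by
    rw [intervalIntegral.integral_of_le hT.le, intervalIntegral.integral_of_le hT.le,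
      integral_Ioc_eq_integral_Ioo, integral_Ioc_eq_integral_Ioo]
    refine setIntegral_congr_fun measurableSet_Ioo fun t ht => ?_
    have : (fun s => pdx φ L₀ s) =ᶠ[nhds t] fun s => pdx u L₀ s := by
      filter_upwards [Ioo_mem_nhds ht.1 ht.2] with s hs
      exact htr s ⟨hs.1.le, hs.2.le⟩
    simp only [pdt]
    rw [this.deriv_eq]
  rw [hF T, hF 0, s3, s4, s1, s2, m1, m2, tr, hη0, hηL]
  ring
end
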